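/- Let n ≥ 3 be an integer. For every function t assigning a nonzero real number t(i,j,k) to each triple of integers i,j,k ≥ 1 with i+j+k = n, there exists a transverse triple (F,G,H) of complete flags in ℝ^n such that T_{i,j,k}(F,G,H) = t(i,j,k) for all such triples (i,j,k). -/

import Mathlib

/-- `F` is a complete flag in an `n`-dimensional real vector space:
`F 0 ⊆ F 1 ⊆ ⋯ ⊆ F n` with `dim (F l) = l` for `0 ≤ l ≤ n`. -/
def IsFlag (n : ℕ) {V : Type*} [AddCommGroup V] [Module ℝ V]
    (F : ℕ → Submodule ℝ V) : Prop :=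
  (∀ l, l < n → F l ≤ F (l + 1)) ∧ ∀ l, l ≤ n → Module.finrank ℝ (F l) = l

/-- A triple of flags is transverse if `F a + G b + H c = V` whenever `a + b + c = n`. -/
def TransverseTriple (n : ℕ) {V : Type*} [AddCommGroup V] [Module ℝ V]
    (F G H : ℕ → Submodule ℝ V) : Prop :=
  ∀ a b c : ℕ, a + b + c = n → F a ⊔ G b ⊔ H c = ⊤

/-- A pair of flags is transverse if `F a + G (n - a) = V` for all `0 ≤ a ≤ n`. -/
def TransversePair (n : ℕ) {V : Type*} [AddCommGroup V] [Module ℝ V]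
    (F G : ℕ → Submodule ℝ V) : Prop :=
  ∀ a, a ≤ n → F a ⊔ G (n - a) = ⊤

/-- `A` is the `(i,j,k)`-eruption endomorphism of the triple `(F,G,H)`: it acts as the
scalar `(n - i)/n` on `F i` and as the scalar `-i/n` on `G j + H k`. -/
def IsEruption (n i j k : ℕ) {V : Type*} [AddCommGroup V] [Module ℝ V]
    (F G H : ℕ → Submodule ℝ V) (A : Module.End ℝ V) : Prop :=
  (∀ v ∈ F i, A v = (((n : ℝ) - (i : ℝ)) / (n : ℝ)) • v) ∧
  (∀ v ∈ G j ⊔ H k, A v = (-(i : ℝ) / (n : ℝ)) • v)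

/-- `A` is the `(i, n-i)`-shearing endomorphism of the pair `(F,G)`: it acts as the
scalar `(n - i)/n` on `F i` and as the scalar `-i/n` on `G (n - i)`. -/
def IsShearing (n i : ℕ) {V : Type*} [AddCommGroup V] [Module ℝ V]
    (F G : ℕ → Submodule ℝ V) (A : Module.End ℝ V) : Prop :=
  (∀ v ∈ F i, A v = (((n : ℝ) - (i : ℝ)) / (n : ℝ)) • v) ∧
  (∀ v ∈ G (n - i), A v = (-(i : ℝ) / (n : ℝ)) • v)

/-- `f` (whose values `f 0, …, f (n-1)` matter) is a basis adapted to the flag `F`: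
`F l` is the span of `f 0, …, f (l-1)` for all `0 ≤ l ≤ n`. -/
def Adapted (n : ℕ) {V : Type*} [AddCommGroup V] [Module ℝ V]
    (F : ℕ → Submodule ℝ V) (f : ℕ → V) : Prop :=
  ∀ l, l ≤ n → F l = Submodule.span ℝ (f '' Set.Iio l)

/-- `F^(a) ∧ G^(b) ∧ H^(c) := ω (f 0, …, f (a-1), g 0, …, g (b-1), h 0, …, h (c-1))`,
for `a + b + c = n`. -/
noncomputable def wedge (n : ℕ) {V : Type*} [AddCommGroup V] [Module ℝ V]
    (ω : AlternatingMap ℝ V ℝ (Fin n)) (f g h : ℕ → V) (a b c : ℕ) : ℝ :=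
  ω fun l : Fin n =>
    if (l : ℕ) < a then f (l : ℕ)
    else if (l : ℕ) < a + b then g ((l : ℕ) - a)
    else h ((l : ℕ) - a - b)

/-- The triple ratio `T_{i,j,k}(F,G,H)` computed with adapted bases `f, g, h` of the
flags `F, G, H` and the nonzero alternating `n`-form `ω`. -/
noncomputable def tripleRatio (n : ℕ) {V : Type*} [AddCommGroup V] [Module ℝ V]
    (ω : AlternatingMap ℝ V ℝ (Fin n)) (f g h : ℕ → V) (i j k : ℕ) : ℝ :=
  (wedge n ω f g h (i + 1) j (k - 1) / wedge n ω f g h (i + 1) (j - 1) k) *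
  (wedge n ω f g h (i - 1) (j + 1) k / wedge n ω f g h i (j + 1) (k - 1)) *
  (wedge n ω f g h i (j - 1) (k + 1) / wedge n ω f g h (i - 1) j (k + 1))

/-- The family of vectors entering `wedge`. -/
def fam {n : ℕ} (f g h : ℕ → (Fin n → ℝ)) (a b : ℕ) : Fin n → (Fin n → ℝ) :=
  fun l : Fin n =>
    if (l : ℕ) < a then f (l : ℕ)
    else if (l : ℕ) < a + b then g ((l : ℕ) - a)
    else h ((l : ℕ) - a - b)

lemma wedge_eq {n : ℕ} (ω : AlternatingMap ℝ (Fin n → ℝ) ℝ (Fin n))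
    (f g h : ℕ → (Fin n → ℝ)) (a b c : ℕ) :
    wedge n ω f g h a b c = ω (Pi.basisFun ℝ (Fin n)) * Matrix.det (fam f g h a b) := by
  have h1 := AlternatingMap.eq_smul_basis_det (Pi.basisFun ℝ (Fin n)) ω
  have h2 : wedge n ω f g h a b c = ω (fam f g h a b) := rfl
  rw [h2]
  conv_lhs => rw [h1]
  rw [AlternatingMap.smul_apply, Pi.basisFun_det_apply]
  rfl

lemma omega_ne {n : ℕ} (ω : AlternatingMap ℝ (Fin n → ℝ) ℝ (Fin n)) (hω : ω ≠ 0) :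
    ω (Pi.basisFun ℝ (Fin n)) ≠ 0 := by
  intro h0
  apply hω
  rw [AlternatingMap.eq_smul_basis_det (Pi.basisFun ℝ (Fin n)) ω, h0, zero_smul]

lemma range_fam {n : ℕ} (f g h : ℕ → (Fin n → ℝ)) (a b c : ℕ) (habc : a + b + c = n) :
    Set.range (fam f g h a b) = f '' Set.Iio a ∪ g '' Set.Iio b ∪ h '' Set.Iio c := by
  ext v
  simp only [Set.mem_range, Set.mem_union, Set.mem_image, Set.mem_Iio]
  constructor
  · rintro ⟨l, rfl⟩
    have := l.2
    unfold fam
    split_ifs with h1 h2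
    · exact Or.inl (Or.inl ⟨l, h1, rfl⟩)
    · exact Or.inl (Or.inr ⟨l - a, by omega, rfl⟩)
    · exact Or.inr ⟨l - a - b, by omega, rfl⟩
  · rintro ((⟨l, hl, rfl⟩ | ⟨l, hl, rfl⟩) | ⟨l, hl, rfl⟩)
    · refine ⟨⟨l, by omega⟩, ?_⟩
      simp [fam, hl]
    · refine ⟨⟨a + l, by omega⟩, ?_⟩
      simp [fam, hl]
    · refine ⟨⟨a + b + l, by omega⟩, ?_⟩
      have h1 : ¬ (a + b + l < a) := by omega
      have h3 : a + b + l - a - b = l := by omega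
      simp [fam, h1, h3]

lemma det_ne_iff {n : ℕ} (v : Fin n → (Fin n → ℝ)) :
    Matrix.det v ≠ 0 ↔ Submodule.span ℝ (Set.range v) = ⊤ := by
  have h := Module.Basis.is_basis_iff_det (Pi.basisFun ℝ (Fin n)) (v := v)
  rw [Pi.basisFun_det_apply, isUnit_iff_ne_zero] at h
  have h' : Matrix.det v = (Matrix.of v).det := rfl
  rw [h', ← h]
  constructor
  · exact fun x => x.2
  · intro x
    refine ⟨?_, x⟩
    exact linearIndependent_of_top_le_span_of_card_eq_finrank x.ge (by simp)

lemma det_fam_ne_iff {n : ℕ} (f g h : ℕ → (Fin n → ℝ)) (a b c : ℕ) (habc : a + b + c = n) :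
    Matrix.det (fam f g h a b) ≠ 0 ↔
      Submodule.span ℝ (f '' Set.Iio a) ⊔ Submodule.span ℝ (g '' Set.Iio b) ⊔
        Submodule.span ℝ (h '' Set.Iio c) = ⊤ := by
  rw [det_ne_iff, range_fam f g h a b c habc, Submodule.span_union, Submodule.span_union]

lemma block_sum {n : ℕ} (u : Fin n → (Fin n → ℝ)) (F : ℕ → (Fin n → ℝ)) (p : ℕ → ℝ)
    (s k : ℕ) (hsk : s + k < n)
    (hu : ∀ m (hm : m ≤ k), u ⟨s + m, by omega⟩ = F m) :
    ∑ m : Fin n, (if s ≤ (m : ℕ) ∧ (m : ℕ) ≤ s + k then p (m - s) else 0) • u m =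
      ∑ m ∈ Finset.range (k + 1), p m • F m := by
  rw [← Fin.sum_univ_eq_sum_range (fun m => p m • F m) (k + 1)]
  symm
  apply Fintype.sum_of_injective (fun m : Fin (k + 1) => (⟨s + m, by omega⟩ : Fin n))
  · intro x y hxy
    simp only [Fin.mk.injEq] at hxy
    ext
    omega
  · intro i hi
    rw [if_neg, zero_smul]
    rintro ⟨h1, h2⟩
    apply hi
    exact ⟨⟨i - s, by omega⟩, by ext; simp; omega⟩
  · intro i
    have := i.2
    rw [hu i (by omega), if_pos ⟨by simp, by simp; omega⟩]
    simp

lemma exists_coeff {n : ℕ} (f f' : ℕ → (Fin n → ℝ))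
    (hf : ∀ l, l < n → f' l ∈ Submodule.span ℝ (f '' Set.Iio (l + 1))) :
    ∃ p : ℕ → ℕ → ℝ, ∀ l, l < n → f' l = ∑ m ∈ Finset.range (l + 1), p l m • f m := by
  have : ∀ l, ∃ p : ℕ → ℝ, l < n → f' l = ∑ m ∈ Finset.range (l + 1), p m • f m := by
    intro l
    by_cases hl : l < n
    · have h1 := hf l hl
      have h2 : Set.Iio (l + 1) = ((Finset.range (l + 1) : Finset ℕ) : Set ℕ) := by simp
      rw [h2, Submodule.mem_span_image_finset_iff_exists_fun'] at h1
      obtain ⟨c, hc⟩ := h1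
      exact ⟨c, fun _ => hc.symm⟩
    · exact ⟨0, fun h => absurd h hl⟩
  choose p hp using this
  exact ⟨p, hp⟩

lemma det_scale {n : ℕ} (f g h f' g' h' : ℕ → (Fin n → ℝ))
    (hf : ∀ l, l < n → f' l ∈ Submodule.span ℝ (f '' Set.Iio (l + 1)))
    (hg : ∀ l, l < n → g' l ∈ Submodule.span ℝ (g '' Set.Iio (l + 1)))
    (hh : ∀ l, l < n → h' l ∈ Submodule.span ℝ (h '' Set.Iio (l + 1))) :
    ∃ A B C : ℕ → ℝ, ∀ a b c, a + b + c = n →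
      Matrix.det (fam f' g' h' a b) = A a * B b * C c * Matrix.det (fam f g h a b) := by
  obtain ⟨p, hp⟩ := exists_coeff f f' hf
  obtain ⟨q, hq⟩ := exists_coeff g g' hg
  obtain ⟨r, hr⟩ := exists_coeff h h' hh
  refine ⟨fun a => ∏ l ∈ Finset.range a, p l l, fun a => ∏ l ∈ Finset.range a, q l l,
    fun a => ∏ l ∈ Finset.range a, r l l, ?_⟩
  intro a b c habc
  let P : Matrix (Fin n) (Fin n) ℝ := fun l m =>
    if (l : ℕ) < a then
      (if 0 ≤ (m : ℕ) ∧ (m : ℕ) ≤ 0 + (l : ℕ) then p l (m - 0) else 0)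
    else if (l : ℕ) < a + b then
      (if a ≤ (m : ℕ) ∧ (m : ℕ) ≤ a + ((l : ℕ) - a) then q (l - a) (m - a) else 0)
    else
      (if (a + b) ≤ (m : ℕ) ∧ (m : ℕ) ≤ (a + b) + ((l : ℕ) - a - b)
        then r (l - a - b) (m - (a + b)) else 0)
  let N : Matrix (Fin n) (Fin n) ℝ := fam f g h a b
  let N' : Matrix (Fin n) (Fin n) ℝ := fam f' g' h' a b
  have hmul : N' = P * N := by
    have key : ∀ l : Fin n, fam f' g' h' a b l = ∑ m : Fin n, P l m • fam f g h a b m := by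
      intro l
      have hl := l.2
      by_cases h1 : (l : ℕ) < a
      · have e1 : fam f' g' h' a b l = f' l := by simp [fam, h1]
        rw [e1, hp l hl, ← block_sum (fam f g h a b) f (p l) 0 l (by omega)]
        · simp only [P, if_pos h1]
        · intro m hm
          have : m < a := by omega
          simp [fam, this]
      · by_cases h2 : (l : ℕ) < a + b
        · have e1 : fam f' g' h' a b l = g' (l - a) := by simp [fam, h1, h2]
          rw [e1, hq (l - a) (by omega),
            ← block_sum (fam f g h a b) g (q (l - a)) a (l - a) (by omega)]
          · simp only [P, if_neg h1, if_pos h2]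
          · intro m hm
            have : m < b := by omega
            simp [fam, this]
        · have e1 : fam f' g' h' a b l = h' (l - a - b) := by simp [fam, h1, h2]
          rw [e1, hr (l - a - b) (by omega),
            ← block_sum (fam f g h a b) h (r (l - a - b)) (a + b) (l - a - b) (by omega)]
          · simp only [P, if_neg h1, if_neg h2]
          · intro m hm
            have h4 : ¬ (a + b + m < a) := by omega
            have h3 : a + b + m - a - b = m := by omega
            simp [fam, h4, h3]
    ext l m
    change fam f' g' h' a b l m = _
    rw [key l, Matrix.mul_apply]
    simp [N]
  have hmul' := congrArg Matrix.det hmul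
  rw [Matrix.det_mul] at hmul'
  change N'.det = _ * N.det
  rw [hmul']
  congr 1
  have htri : P.BlockTriangular OrderDual.toDual := by
    intro l m hlm
    have : (l : ℕ) < m := by simpa using hlm
    simp only [P]
    split_ifs <;> first | rfl | omega
  rw [Matrix.det_of_isLowerTriangular P htri]
  let d : ℕ → ℝ := fun l => if l < a then p l l else if l < a + b then q (l - a) (l - a)
    else r (l - a - b) (l - a - b)
  have hd : ∀ l : Fin n, P l l = d l := by
    intro l
    simp only [P, d]
    split_ifs <;> first | rfl | omega | (rw [Nat.sub_sub])
  rw [Finset.prod_congr rfl (fun l _ => hd l), Fin.prod_univ_eq_prod_range d n, ← habc,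
    Finset.prod_range_add, Finset.prod_range_add]
  congr 1
  · congr 1
    · apply Finset.prod_congr rfl
      intro l hl
      simp [d, Finset.mem_range.1 hl]
    · apply Finset.prod_congr rfl
      intro l hl
      simp [d, Finset.mem_range.1 hl]
  · apply Finset.prod_congr rfl
    intro l hl
    have h4 : ¬ (a + b + l < a) := by omega
    have h3 : a + b + l - a - b = l := by omega
    simp [d, h4, h3]

lemma tri_solve {V : Type*} [AddCommGroup V] [Module ℝ V] (φ : ℕ → V →ₗ[ℝ] ℝ) (e : ℕ → V)
    (m : ℕ) (h0 : ∀ a l, a < m → l < a → φ a (e l) = 0) (h1 : ∀ a, a < m → φ a (e a) ≠ 0)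
    (y : ℕ → ℝ) : ∃ v, ∀ a, a < m → φ a v = y a := by
  have : ∀ k, ∃ v, ∀ a, m ≤ a + k → a < m → φ a v = y a := by
    intro k
    induction k with
    | zero => exact ⟨0, fun a h1 h2 => by omega⟩
    | succ k ih =>
      obtain ⟨v, hv⟩ := ih
      by_cases hk : k + 1 ≤ m
      · have hlt : m - (k + 1) < m := by omega
        refine ⟨v + ((y (m - (k + 1)) - φ (m - (k + 1)) v) /
          φ (m - (k + 1)) (e (m - (k + 1)))) • e (m - (k + 1)), ?_⟩
        intro a ha1 ha2
        by_cases hak : m ≤ a + k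
        · rw [map_add, map_smul, h0 a _ ha2 (by omega), hv a hak ha2]
          simp
        · have : a = m - (k + 1) := by omega
          subst this
          rw [map_add, map_smul, smul_eq_mul, div_mul_cancel₀ _ (h1 _ hlt)]
          ring
      · exact ⟨v, fun a ha1 ha2 => hv a (by omega) ha2⟩
  obtain ⟨v, hv⟩ := this m
  exact ⟨v, fun a ha => hv a (by omega) ha⟩

lemma fam_update {n : ℕ} (f g h : ℕ → (Fin n → ℝ)) (a b c : ℕ) (v : Fin n → ℝ)
    (habc : a + b + c = n) (d : ℕ) (hd : c ≤ d) :
    fam f g (Function.update h d v) a b = fam f g h a b := by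
  funext l
  have := l.2
  unfold fam
  split_ifs
  · rfl
  · rfl
  · rw [Function.update_of_ne]
    omega

lemma exists_h {n : ℕ} (f g : ℕ → (Fin n → ℝ)) (w : ℕ → ℕ → ℝ)
    (hw : ∀ a c, w a c ≠ 0)
    (hfg : ∀ (h : ℕ → (Fin n → ℝ)) a b, a + b = n → Matrix.det (fam f g h a b) = w a 0) :
    ∀ c0, ∃ h : ℕ → (Fin n → ℝ), ∀ a b c, c ≤ c0 → a + b + c = n →
      Matrix.det (fam f g h a b) = w a c := by
  intro c0
  induction c0 with
  | zero =>
    refine ⟨0, fun a b c hc habc => ?_⟩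
    obtain rfl : c = 0 := by omega
    exact hfg 0 a b habc
  | succ c0 ih =>
    obtain ⟨h, hh⟩ := ih
    by_cases hn : c0 + 1 ≤ n
    swap
    · exact ⟨h, fun a b c hc habc => hh a b c (by omega) habc⟩
    let last : Fin n := ⟨n - 1, by omega⟩
    let φ : ℕ → (Fin n → ℝ) →ₗ[ℝ] ℝ := fun a =>
      (Matrix.detRowAlternating (n := Fin n) (R := ℝ)).toMultilinearMap.toLinearMap
        (fam f g h a (n - (c0 + 1) - a)) last
    have hφ : ∀ a v, a < n - c0 → φ a v =
        Matrix.det (fam f g (Function.update h c0 v) a (n - (c0 + 1) - a)) := by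
      intro a v ha
      have : Function.update (fam f g h a (n - (c0 + 1) - a)) last v =
          fam f g (Function.update h c0 v) a (n - (c0 + 1) - a) := by
        funext l
        by_cases hl : l = last
        · subst hl
          have h1 : ¬ (n - 1 < a) := by omega
          have h2 : ¬ (n - 1 < a + (n - (c0 + 1) - a)) := by omega
          have h3 : n - 1 - a - (n - (c0 + 1) - a) = c0 := by omega
          simp [fam, last, h1, h2, h3]
        · have hl' : (l : ℕ) ≠ n - 1 := fun h => hl (Fin.ext h)
          have := l.2
          rw [Function.update_of_ne hl]
          unfold fam
          split_ifs
          · rfl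
          · rfl
          · rw [Function.update_of_ne]
            omega
      rw [← this]
      rfl
    obtain ⟨v, hv⟩ := tri_solve φ f (n - c0) (by
      intro a l ha hl
      rw [hφ a _ ha]
      apply Matrix.det_zero_of_row_eq (i := ⟨l, by omega⟩) (j := last)
      · intro h
        have := congrArg Fin.val h
        simp [last] at this
        omega
      · have h1 : ¬ (n - 1 < a) := by omega
        have h2 : ¬ (n - 1 < a + (n - (c0 + 1) - a)) := by omega
        have h3 : n - 1 - a - (n - (c0 + 1) - a) = c0 := by omega
        simp [fam, last, h1, h2, h3, hl]) (by
      intro a ha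
      rw [hφ a _ ha, det_ne_iff, range_fam _ _ _ _ _ (c0 + 1) (by omega)]
      have h1 : Matrix.det (fam f g h (a + 1) (n - (c0 + 1) - a)) ≠ 0 := by
        rw [hh (a + 1) _ c0 le_rfl (by omega)]
        exact hw _ _
      rw [det_ne_iff, range_fam _ _ _ _ _ c0 (by omega)] at h1
      rw [eq_top_iff, ← h1]
      apply Submodule.span_mono
      rintro x ((⟨l, hl, rfl⟩ | ⟨l, hl, rfl⟩) | ⟨l, hl, rfl⟩)
      · simp only [Set.mem_Iio] at hl
        by_cases hla : l = a
        · subst hla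
          exact Or.inr ⟨c0, by simp, by simp⟩
        · exact Or.inl (Or.inl ⟨l, by simp; omega, rfl⟩)
      · exact Or.inl (Or.inr ⟨l, hl, rfl⟩)
      · simp only [Set.mem_Iio] at hl
        exact Or.inr ⟨l, by simp; omega, by rw [Function.update_of_ne (by omega)]⟩)
      (fun a => w a (c0 + 1))
    refine ⟨Function.update h c0 v, fun a b c hc habc => ?_⟩
    by_cases hc' : c ≤ c0
    · rw [fam_update f g h a b c v habc c0 hc']
      exact hh a b c hc' habc
    · obtain rfl : c = c0 + 1 := by omega
      obtain rfl : b = n - (c0 + 1) - a := by omega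
      rw [← hφ a v (by omega)]
      exact hv a (by omega)

/-- next row of the target values -/
noncomputable def nextRow (s : ℕ → ℝ) (p q : ℕ → ℝ) : ℕ → ℝ
  | 0 => 1
  | i + 1 => s (i + 1) * nextRow s p q i * q (i + 2) * p (i + 1) / (p (i + 2) * q i)

lemma nextRow_ne (s p q : ℕ → ℝ) (hs : ∀ i, s i ≠ 0) (hp : ∀ i, p i ≠ 0) (hq : ∀ i, q i ≠ 0)
    (i : ℕ) : nextRow s p q i ≠ 0 := by
  induction i with
  | zero => simp [nextRow]
  | succ i ih => simp [nextRow, hs, hp, hq, ih]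

/-- target values, as function of `c` then `a` -/
noncomputable def target (s : ℕ → ℕ → ℝ) (w0 : ℕ → ℝ) : ℕ → ℕ → ℝ
  | 0 => w0
  | 1 => fun _ => 1
  | k + 2 => nextRow (fun i => s i (k + 1)) (target s w0 k) (target s w0 (k + 1))

lemma target_ne (s : ℕ → ℕ → ℝ) (w0 : ℕ → ℝ) (hs : ∀ i k, s i k ≠ 0) (hw : ∀ i, w0 i ≠ 0) :
    ∀ c, (∀ a, target s w0 c a ≠ 0) ∧ (∀ a, target s w0 (c + 1) a ≠ 0) := by
  intro c
  induction c with
  | zero => exact ⟨by simpa [target] using hw, by simp [target]⟩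
  | succ c ih =>
    refine ⟨ih.2, fun a => ?_⟩
    rw [target]
    exact nextRow_ne _ _ _ (fun i => hs i _) ih.1 ih.2 a

lemma finrank_span_le {n : ℕ} (f : ℕ → (Fin n → ℝ)) (l : ℕ) :
    Module.finrank ℝ (Submodule.span ℝ (f '' Set.Iio l)) ≤ l := by
  have h : f '' Set.Iio l = (((Finset.range l).image f : Finset _) : Set (Fin n → ℝ)) := by
    simp
  rw [h]
  exact (finrank_span_finset_le_card _).trans (Finset.card_image_le.trans (by simp))

lemma finrank_of_sup {n : ℕ} (f g : ℕ → (Fin n → ℝ)) (a b : ℕ) (hab : a + b = n)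
    (h : Submodule.span ℝ (f '' Set.Iio a) ⊔ Submodule.span ℝ (g '' Set.Iio b) = ⊤) :
    Module.finrank ℝ (Submodule.span ℝ (f '' Set.Iio a)) = a ∧
    Module.finrank ℝ (Submodule.span ℝ (g '' Set.Iio b)) = b := by
  have h1 := finrank_span_le f a
  have h2 := finrank_span_le g b
  have h3 := Submodule.finrank_add_le_finrank_add_finrank (Submodule.span ℝ (f '' Set.Iio a))
    (Submodule.span ℝ (g '' Set.Iio b))
  rw [h, finrank_top] at h3
  simp at h3
  omega

theorem statement15 (n : ℕ) (hn : 3 ≤ n) (t : ℕ → ℕ → ℕ → ℝ)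
    (ht : ∀ i j k : ℕ, 1 ≤ i → 1 ≤ j → 1 ≤ k → i + j + k = n → t i j k ≠ 0) :
    ∃ F G H : ℕ → Submodule ℝ (Fin n → ℝ),
      IsFlag n F ∧ IsFlag n G ∧ IsFlag n H ∧ TransverseTriple n F G H ∧
      ∀ (ω : AlternatingMap ℝ (Fin n → ℝ) ℝ (Fin n)) (f g h : ℕ → (Fin n → ℝ)),
        ω ≠ 0 → Adapted n F f → Adapted n G g → Adapted n H h →
        ∀ i j k : ℕ, 1 ≤ i → 1 ≤ j → 1 ≤ k → i + j + k = n →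
          tripleRatio n ω f g h i j k = t i j k := by
  let f : ℕ → (Fin n → ℝ) := fun l => if h : l < n then Pi.single ⟨l, h⟩ 1 else 0
  let g : ℕ → (Fin n → ℝ) := fun l => f (n - 1 - l)
  have hbase : ∀ (h : ℕ → (Fin n → ℝ)) a b, a + b = n → Matrix.det (fam f g h a b) ≠ 0 := by
    intro h a b hab
    rw [det_ne_iff, range_fam f g h a b 0 hab, eq_top_iff, ← (Pi.basisFun ℝ (Fin n)).span_eq]
    apply Submodule.span_mono
    rintro x ⟨l, rfl⟩
    have hl := l.2
    have hfl : f l = Pi.basisFun ℝ (Fin n) l := by simp [f]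
    by_cases hla : (l : ℕ) < a
    · exact Or.inl (Or.inl ⟨l, hla, hfl⟩)
    · refine Or.inl (Or.inr ⟨n - 1 - l, by simp; omega, ?_⟩)
      have : n - 1 - (n - 1 - (l : ℕ)) = l := by omega
      simp only [g, this, hfl]
  let w0 : ℕ → ℝ := fun a => if a ≤ n then Matrix.det (fam f g 0 a (n - a)) else 1
  have hw0 : ∀ a, w0 a ≠ 0 := by
    intro a
    by_cases ha : a ≤ n
    · simp only [w0, if_pos ha]
      exact hbase 0 a (n - a) (by omega)
    · simp [w0, ha]
  let s : ℕ → ℕ → ℝ := fun i k => if t i (n - i - k) k = 0 then 1 else t i (n - i - k) k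
  have hs : ∀ i k, s i k ≠ 0 := by
    intro i k
    simp only [s]
    split_ifs with h
    · exact one_ne_zero
    · exact h
  obtain ⟨h, hh⟩ := exists_h f g (fun a c => target s w0 c a)
    (fun a c => (target_ne s w0 hs hw0 c).1 a) (by
      intro h a b hab
      obtain rfl : b = n - a := by omega
      simp only [target, w0, if_pos (show a ≤ n by omega)]
      congr 1
      funext l
      have := l.2
      unfold fam
      split_ifs
      · rfl
      · rfl
      · omega) n
  have hD : ∀ a b c, a + b + c = n → Matrix.det (fam f g h a b) = target s w0 c a :=
    fun a b c habc => hh a b c (by omega) habc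
  have hT : TransverseTriple n (fun l => Submodule.span ℝ (f '' Set.Iio l))
      (fun l => Submodule.span ℝ (g '' Set.Iio l)) (fun l => Submodule.span ℝ (h '' Set.Iio l)) := by
    intro a b c habc
    rw [← det_fam_ne_iff f g h a b c habc, hD a b c habc]
    exact (target_ne s w0 hs hw0 c).1 a
  have hmono : ∀ (f : ℕ → (Fin n → ℝ)) l, l < n →
      Submodule.span ℝ (f '' Set.Iio l) ≤ Submodule.span ℝ (f '' Set.Iio (l + 1)) := by
    intro f l _
    exact Submodule.span_mono (Set.image_mono (Set.Iio_subset_Iio (by omega)))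
  refine ⟨_, _, _, ⟨hmono f, ?_⟩, ⟨hmono g, ?_⟩, ⟨hmono h, ?_⟩, hT, ?_⟩
  · intro l hl
    have := hT l (n - l) 0 (by omega)
    simp at this
    exact (finrank_of_sup f g l (n - l) (by omega) this).1
  · intro l hl
    have := hT (n - l) l 0 (by omega)
    simp at this
    exact (finrank_of_sup f g (n - l) l (by omega) this).2
  · intro l hl
    have := hT (n - l) 0 l (by omega)
    simp at this
    exact (finrank_of_sup f h (n - l) l (by omega) this).2
  · intro ω f' g' h' hω hf' hg' hh' i j k hi hj hk hijk
    have hmem : ∀ (f f' : ℕ → (Fin n → ℝ)),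
        Adapted n (fun l => Submodule.span ℝ (f '' Set.Iio l)) f' →
        ∀ l, l < n → f' l ∈ Submodule.span ℝ (f '' Set.Iio (l + 1)) := by
      intro f f' hA l hl
      have := hA (l + 1) (by omega)
      simp only at this
      rw [this]
      exact Submodule.subset_span ⟨l, by simp, rfl⟩
    obtain ⟨A, B, C, hABC⟩ := det_scale f g h f' g' h' (hmem _ _ hf') (hmem _ _ hg') (hmem _ _ hh')
    have hne' : ∀ a b c, a + b + c = n → Matrix.det (fam f' g' h' a b) ≠ 0 := by
      intro a b c habc
      rw [det_fam_ne_iff f' g' h' a b c habc, ← hf' a (by omega), ← hg' b (by omega),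
        ← hh' c (by omega)]
      exact hT a b c habc
    have hABCne : ∀ a b c, a + b + c = n → A a ≠ 0 ∧ B b ≠ 0 ∧ C c ≠ 0 := by
      intro a b c habc
      have := hne' a b c habc
      rw [hABC a b c habc] at this
      simp only [mul_ne_zero_iff] at this
      tauto
    have hW : ∀ a b c, a + b + c = n → wedge n ω f' g' h' a b c =
        ω (Pi.basisFun ℝ (Fin n)) * (A a * B b * C c * target s w0 c a) := by
      intro a b c habc
      rw [wedge_eq, hABC a b c habc, hD a b c habc]
    have hκ := omega_ne ω hω
    obtain ⟨i, rfl⟩ : ∃ i', i = i' + 1 := ⟨i - 1, by omega⟩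
    obtain ⟨j, rfl⟩ : ∃ i', j = i' + 1 := ⟨j - 1, by omega⟩
    obtain ⟨k, rfl⟩ : ∃ i', k = i' + 1 := ⟨k - 1, by omega⟩
    unfold tripleRatio
    simp only [Nat.add_sub_cancel]
    rw [hW _ _ _ (by omega), hW _ _ _ (by omega), hW _ _ _ (by omega), hW _ _ _ (by omega),
      hW _ _ _ (by omega), hW _ _ _ (by omega)]
    have hs' : s (i + 1) (k + 1) = t (i + 1) (j + 1) (k + 1) := by
      have h1 : n - (i + 1) - (k + 1) = j + 1 := by omega
      have h2 := ht (i + 1) (j + 1) (k + 1) hi hj hk hijk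
      simp only [s, h1, if_neg h2]
    have hrec : target s w0 (k + 1 + 1) (i + 1) = t (i + 1) (j + 1) (k + 1) *
        target s w0 (k + 1 + 1) i * target s w0 (k + 1) (i + 1 + 1) * target s w0 k (i + 1) /
        (target s w0 k (i + 1 + 1) * target s w0 (k + 1) i) := by
      rw [← hs']
      simp only [target, nextRow]
    have tn := fun c a => (target_ne s w0 hs hw0 c).1 a
    rw [hrec]
    obtain ⟨a1, b1, c1⟩ := hABCne (i + 1 + 1) (j + 1) k (by omega)
    obtain ⟨a2, b2, c2⟩ := hABCne i (j + 1 + 1) (k + 1) (by omega)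
    obtain ⟨a3, b3, c3⟩ := hABCne (i + 1) j (k + 1 + 1) (by omega)
    have t1 := tn k (i + 1 + 1)
    have t2 := tn (k + 1) (i + 1 + 1)
    have t3 := tn (k + 1) i
    have t4 := tn k (i + 1)
    have t5 := tn (k + 1 + 1) i
    generalize target s w0 k (i + 1 + 1) = T1 at *
    generalize target s w0 (k + 1) (i + 1 + 1) = T2 at *
    generalize target s w0 (k + 1) i = T3 at *
    generalize target s w0 k (i + 1) = T4 at *
    generalize target s w0 (k + 1 + 1) i = T5 at *
    generalize ω (Pi.basisFun ℝ (Fin n)) = κ at *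
    field_simp
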